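/- Let q = p^m ≡ 5 (mod 8) be a prime power with primitive element α of F_q, and let q = s² + t² be the Katre–Rajwade-normalized representation. Then D = C_0^4 ∪ C_3^4 satisfies Δ(D) = ((q−3+t)/4)·C_0^2 + ((q−3−t)/4)·C_1^2 as multisets; in particular, D is a skew PDS corresponding to the Paley (q,(q−1)/2,(q−5)/4,(q−1)/4)-PDS C_0^2 if t = −2, and corresponding to the Paley (q,(q−1)/2,(q−5)/4,(q−1)/4)-PDS C_1^2 if t = 2. -/

import Mathlib

open Finset

section Defs

variable {G : Type*} [AddCommGroup G] [Fintype G] [DecidableEq G]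

/-- The multiset `Δ(D)` of internal differences `x - y` (for `x ≠ y` in `D`). -/
def intDiff (D : Finset G) : Multiset G :=
  ((D ×ˢ D).filter (fun p => p.1 ≠ p.2)).val.map (fun p => p.1 - p.2)

/-- The multiset `Δ(D, E)` of external differences `x - y` for `x ∈ D`, `y ∈ E`. -/
def extDiff (D E : Finset G) : Multiset G :=
  (D ×ˢ E).val.map (fun p => p.1 - p.2)

/-- The finset `G^*` of nonzero elements of `G`. -/
def Gstar (G : Type*) [AddCommGroup G] [Fintype G] [DecidableEq G] : Finset G :=
  Finset.univ.erase 0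

/-- `A` is a `(v, k, lam, mu)` partial difference set in `G`:
`Δ(A) = lam • A^* + mu • (G^* \ A)`. -/
def IsPDS (A : Finset G) (v k lam mu : ℕ) : Prop :=
  Fintype.card G = v ∧ A.card = k ∧
    intDiff A = lam • (A.erase 0).val + mu • (Gstar G \ A).val

/-- `D` is a `(v, k, lam, mu)` skew partial difference set corresponding to the
`(v, k, lam, mu)`-PDS `A`: `Δ(D) = lam • A^* + mu • (G^* \ A)`. -/
def IsSkewPDS (D A : Finset G) (v k lam mu : ℕ) : Prop :=
  IsPDS A v k lam mu ∧ D.card = k ∧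
    intDiff D = lam • (A.erase 0).val + mu • (Gstar G \ A).val

/-- `D` is an `(n, m, k₁, …, k_m; lam, mu)` disjoint partial difference family relative
to `T`: the `D i` are pairwise disjoint subsets of `G^*` of sizes `k i`, and
`∑ i, Δ(D i) = lam • T + mu • (G^* \ T)`. -/
def IsDPDF {ι : Type*} [Fintype ι] (D : ι → Finset G) (n m : ℕ) (k : ι → ℕ)
    (T : Finset G) (lam mu : ℕ) : Prop :=
  Fintype.card G = n ∧ Fintype.card ι = m ∧
    (∀ i, (0 : G) ∉ D i) ∧ (∀ i, (D i).card = k i) ∧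
    (Pairwise (fun i j => Disjoint (D i) (D j))) ∧
    ∑ i, intDiff (D i) = lam • T.val + mu • (Gstar G \ T).val

/-- `D` is an `(n, m, k₁, …, k_m; lam, mu)` external partial difference family relative
to `T`: the `D i` are pairwise disjoint subsets of `G^*` of sizes `k i`, and
`∑_{i ≠ j}, Δ(D i, D j) = lam • T + mu • (G^* \ T)`. -/
def IsEPDF {ι : Type*} [Fintype ι] [DecidableEq ι] (D : ι → Finset G) (n m : ℕ)
    (k : ι → ℕ) (T : Finset G) (lam mu : ℕ) : Prop :=
  Fintype.card G = n ∧ Fintype.card ι = m ∧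
    (∀ i, (0 : G) ∉ D i) ∧ (∀ i, (D i).card = k i) ∧
    (Pairwise (fun i j => Disjoint (D i) (D j))) ∧
    ∑ i, ∑ j ∈ Finset.univ.erase i, extDiff (D i) (D j)
      = lam • T.val + mu • (Gstar G \ T).val

/-- `D` is an `(n, m, k₁, …, k_m, lam)` disjoint difference family:
`∑ i, Δ(D i) = lam • G^*`. -/
def IsDDF {ι : Type*} [Fintype ι] (D : ι → Finset G) (n m : ℕ) (k : ι → ℕ)
    (lam : ℕ) : Prop :=
  Fintype.card G = n ∧ Fintype.card ι = m ∧
    (∀ i, (0 : G) ∉ D i) ∧ (∀ i, (D i).card = k i) ∧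
    (Pairwise (fun i j => Disjoint (D i) (D j))) ∧
    ∑ i, intDiff (D i) = lam • (Gstar G).val

/-- `D` is an `(n, m, k₁, …, k_m, lam)` external difference family:
`∑_{i ≠ j}, Δ(D i, D j) = lam • G^*`. -/
def IsEDF {ι : Type*} [Fintype ι] [DecidableEq ι] (D : ι → Finset G) (n m : ℕ)
    (k : ι → ℕ) (lam : ℕ) : Prop :=
  Fintype.card G = n ∧ Fintype.card ι = m ∧
    (∀ i, (0 : G) ∉ D i) ∧ (∀ i, (D i).card = k i) ∧
    (Pairwise (fun i j => Disjoint (D i) (D j))) ∧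
    ∑ i, ∑ j ∈ Finset.univ.erase i, extDiff (D i) (D j) = lam • (Gstar G).val

end Defs

section Cyclotomy

variable {F : Type*} [Field F] [Fintype F] [DecidableEq F]

/-- The cyclotomic class `C_i^e = α^i ⟨α^e⟩` of order `e` in the finite field `F`,
with respect to the primitive element `α`.  (Since `α` has multiplicative order at most
`|F| - 1`, letting `j` range over `0, …, |F| - 1` captures the whole class.) -/
def cycClass (α : F) (e i : ℕ) : Finset F :=
  (Finset.range (Fintype.card F)).image (fun j => α ^ (e * j + i))

/-- `α` is a primitive element of the finite field `F`: every nonzero element of `F`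
is a power of `α`. -/
def IsPrimitiveElt (α : F) : Prop :=
  ∀ x : F, x ≠ 0 → ∃ n : ℕ, α ^ n = x

end Cyclotomy

section Helpers

set_option linter.unusedSectionVars false
set_option linter.unusedVariables false

variable {F : Type*} [Field F] [Fintype F] [DecidableEq F]

lemma count_intDiff_zero (D : Finset F) : (intDiff D).count 0 = 0 := by
  rw [Multiset.count_eq_zero, intDiff]
  simp only [Multiset.mem_map, Finset.mem_val, Finset.mem_filter, not_exists, not_and]
  rintro ⟨x, y⟩ ⟨_, h⟩ h2
  exact h (sub_eq_zero.mp h2)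

lemma count_intDiff (D : Finset F) {d : F} (hd : d ≠ 0) :
    (intDiff D).count d = (Finset.univ.filter (fun x => x ∈ D ∧ x - d ∈ D)).card := by
  rw [intDiff, Multiset.count_map, ← Finset.filter_val, Finset.card_val]
  symm
  refine Finset.card_bij (fun x _ => (x, x - d)) ?_ ?_ ?_
  · intro x hx
    simp only [Finset.mem_filter, Finset.mem_univ, true_and] at hx
    simp only [Finset.mem_filter, Finset.mem_product, sub_sub_cancel, and_true]
    exact ⟨⟨hx.1, hx.2⟩, fun h => hd (by linear_combination h)⟩
  · intro x _ y _ h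
    exact (Prod.mk.inj h).1
  · rintro ⟨x, y⟩ h
    simp only [Finset.mem_filter, Finset.mem_product] at h
    obtain ⟨⟨⟨h1, h2⟩, h3⟩, h4⟩ := h
    refine ⟨x, ?_, ?_⟩
    · simp only [Finset.mem_filter, Finset.mem_univ, true_and]
      refine ⟨h1, ?_⟩
      rw [h4]; simpa using h2
    · rw [h4]; simp

lemma four_count (f : F → ℤ) (h0 : f 0 = 0) (h1 : ∀ x, x ≠ 0 → f x = 1 ∨ f x = -1)
    (hs : ∑ x, f x = 0) (D : Finset F) (hD : ∀ x, x ∈ D ↔ f x = 1) {d : F} (hd : d ≠ 0) :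
    4 * ((intDiff D).count d : ℤ) =
      Fintype.card F - 2 - f d - f (-d) + ∑ x, f x * f (x - d) := by
  rw [count_intDiff D hd]
  have e1 : ∀ x, (if x ∈ D then (2:ℤ) else 0) = (1 - (if x = 0 then 1 else 0)) + f x := by
    intro x
    by_cases hx : x = 0
    · subst hx; simp [hD, h0]
    · rcases h1 x hx with h | h <;> simp [hD, h, hx]
  have e2 : 4 * (((Finset.univ.filter (fun x => x ∈ D ∧ x - d ∈ D)).card : ℕ) : ℤ) =
      ∑ x, (if x ∈ D then (2:ℤ) else 0) * (if x - d ∈ D then (2:ℤ) else 0) := by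
    rw [Finset.card_filter]
    push_cast
    rw [Finset.mul_sum]
    refine Finset.sum_congr rfl fun x _ => ?_
    by_cases a : x ∈ D <;> by_cases b : x - d ∈ D <;> simp [a, b]
  rw [e2]
  have e3 : ∀ x, (if x ∈ D then (2:ℤ) else 0) * (if x - d ∈ D then (2:ℤ) else 0) =
      1 - (if x = 0 then 1 else 0) - (if x = d then 1 else 0) + f x + f (x - d)
        - (if x = d then f d else 0) - (if x = 0 then f (-d) else 0) + f x * f (x - d) := by
    intro x
    rw [e1, e1]
    by_cases hx : x = 0
    · subst hx
      simp [hd, hd.symm, h0]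
    · by_cases hy : x = d
      · subst hy
        simp [hx, h0]
      · have : x - d ≠ 0 := sub_ne_zero.mpr hy
        simp [hx, hy, this]; ring
  have e4 : ∑ x, f (x - d) = 0 := by
    rw [← hs]
    exact (Equiv.subRight d).sum_comp f
  simp_rw [e3, Finset.sum_add_distrib, Finset.sum_sub_distrib, Finset.sum_add_distrib,
    Finset.sum_sub_distrib, e4, hs]
  simp
  ring

lemma two_card (f : F → ℤ) (h0 : f 0 = 0) (h1 : ∀ x, x ≠ 0 → f x = 1 ∨ f x = -1)
    (hs : ∑ x, f x = 0) (D : Finset F) (hD : ∀ x, x ∈ D ↔ f x = 1) :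
    2 * (D.card : ℤ) = Fintype.card F - 1 := by
  have e1 : ∀ x, (if x ∈ D then (2:ℤ) else 0) = (1 - (if x = 0 then 1 else 0)) + f x := by
    intro x
    by_cases hx : x = 0
    · subst hx; simp [hD, h0]
    · rcases h1 x hx with h | h <;> simp [hD, h, hx]
  have : ∑ x, (if x ∈ D then (2:ℤ) else 0) = 2 * D.card := by
    simp [mul_comm]
  rw [← this]
  simp_rw [e1, Finset.sum_add_distrib, Finset.sum_sub_distrib, hs]
  simp

/-- convolution of multiplicative characters -/
lemma conv_char {R : Type*} [CommRing R] (χ φ : MulChar F R) {d : F} (hd : d ≠ 0) :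
    ∑ x, χ x * φ (x - d) = χ d * φ d * φ (-1) * jacobiSum χ φ := by
  rw [jacobiSum, Finset.mul_sum, ← Equiv.sum_comp (Equiv.mulLeft₀ d hd)]
  refine Finset.sum_congr rfl fun x _ => ?_
  have : d * x - d = d * (-1 * (1 - x)) := by ring
  simp only [Equiv.mulLeft₀_apply, this, map_mul]
  ring

lemma conv_char' {R : Type*} [CommRing R] (χ φ : MulChar F R) {d : F} (hd : d ≠ 0) :
    ∑ x, χ x * φ (d - x) = χ d * φ d * jacobiSum χ φ := by
  rw [jacobiSum, Finset.mul_sum, ← Equiv.sum_comp (Equiv.mulLeft₀ d hd)]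
  refine Finset.sum_congr rfl fun x _ => ?_
  have : d - d * x = d * (1 - x) := by ring
  simp only [Equiv.mulLeft₀_apply, this, map_mul]
  ring

lemma sum_pow_field (i : ℕ) (hi : i ≠ 0) :
    ∑ x : F, x ^ i = if Fintype.card F - 1 ∣ i then -1 else 0 := by
  rw [← FiniteField.sum_pow_units F i]
  let φ : Fˣ ↪ F := ⟨fun x ↦ x, Units.val_injective⟩
  have : univ.map φ = univ \ {0} := by
    ext x
    simpa only [mem_map, mem_univ, Function.Embedding.coeFn_mk, true_and, mem_sdiff,
      mem_singleton, φ] using! isUnit_iff_ne_zero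
  calc
    ∑ x : F, x ^ i = ∑ x ∈ univ \ {(0 : F)}, x ^ i := by
      rw [← sum_sdiff ({0} : Finset F).subset_univ, sum_singleton, zero_pow hi, add_zero]
    _ = ∑ x : Fˣ, (x ^ i : F) := by simp [φ, ← this, univ.sum_map φ]

lemma choose_lucas (p c : ℕ) (hp : p.Prime) (hc : p = 4 * c + 1) (m : ℕ) :
    ∃ k, 4 * k + 1 = p ^ m ∧ ¬ p ∣ (2 * k).choose k := by
  have := Fact.mk hp
  induction m with
  | zero => exact ⟨0, by simp, by simpa using hp.one_lt.ne'⟩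
  | succ m ih =>
    obtain ⟨k, hk, hnd⟩ := ih
    refine ⟨p * k + c, ?_, ?_⟩
    · rw [pow_succ, ← hk, hc]; ring
    · have h := Choose.choose_modEq_choose_mod_mul_choose_div_nat (p := p) (n := 2 * (p * k + c))
        (k := p * k + c)
      have pp := hp.pos
      have a1 : (2 * (p * k + c)) % p = 2 * c := by
        rw [show 2 * (p * k + c) = 2 * c + p * (2 * k) by ring, Nat.add_mul_mod_self_left,
          Nat.mod_eq_of_lt (by omega)]
      have a2 : (2 * (p * k + c)) / p = 2 * k := by
        rw [show 2 * (p * k + c) = 2 * c + p * (2 * k) by ring, Nat.add_mul_div_left _ _ pp,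
          Nat.div_eq_of_lt (by omega), zero_add]
      have a3 : (p * k + c) % p = c := by
        rw [show (p * k + c) = c + p * (k) by ring, Nat.add_mul_mod_self_left,
          Nat.mod_eq_of_lt (by omega)]
      have a4 : (p * k + c) / p = k := by
        rw [show (p * k + c) = c + p * (k) by ring, Nat.add_mul_div_left _ _ pp,
          Nat.div_eq_of_lt (by omega), zero_add]
      rw [a1, a2, a3, a4] at h
      rw [h.dvd_iff dvd_rfl, hp.dvd_mul, not_or]
      refine ⟨?_, hnd⟩
      intro hd
      have h2 := hp.coprime_choose_of_lt (a := c) (b := 2 * c) (by omega) (by omega)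
      exact (hp.coprime_iff_not_dvd.mp h2) hd

/-- uniqueness of normalized representation -/
lemma normalized_unique (q A B s t : ℤ) (hq : 0 < q) (hst : q = s ^ 2 + t ^ 2)
    (hAB : q = A ^ 2 + B ^ 2) (hs : s % 4 = 1) (hA : A % 4 = 1) (hB : B % 2 = 0)
    (ht : t % 2 = 0) (hdvd : q ∣ A * t + B * s) : B = -t := by
  have key : (A * s - B * t) ^ 2 + (A * t + B * s) ^ 2 = q ^ 2 := by
    have : q ^ 2 = (A ^ 2 + B ^ 2) * (s ^ 2 + t ^ 2) := by rw [← hst, ← hAB]; ring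
    rw [this]; ring
  have hodd : A * s - B * t ≠ 0 := by
    intro h
    have : (A * s - B * t) % 2 = 1 := by
      have a1 : A % 2 = 1 := by omega
      have a2 : s % 2 = 1 := by omega
      simp [Int.sub_emod, Int.mul_emod, a1, a2, hB, ht]
    rw [h] at this; simp at this
  obtain ⟨c, hc⟩ := hdvd
  have hz : c = 0 := by
    by_contra hne
    have : 0 < (A * s - B * t) ^ 2 := by positivity
    have h1 : 1 ≤ c ^ 2 := by have : 0 < c ^ 2 := by positivity
                              omega
    rw [hc] at key
    nlinarith [sq_nonneg q]
  rw [hz, mul_zero] at hc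
  rw [hc] at key
  have h2 : A * q = s * (A * s - B * t) := by rw [hst]; linear_combination t * hc
  have h3 : (A * s - B * t) = q ∨ (A * s - B * t) = -q := by
    apply sq_eq_sq_iff_eq_or_eq_neg.mp; linarith
  have hAs : A = s := by
    rcases h3 with h | h
    · rw [h] at h2; exact mul_right_cancel₀ hq.ne' h2
    · rw [h] at h2
      have : A = -s := mul_right_cancel₀ hq.ne' (by linarith)
      omega
  have hs0 : s ≠ 0 := by rintro rfl; simp at hs
  subst hAs
  have : A * (B + t) = 0 := by linarith
  rcases mul_eq_zero.mp this with h | h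
  · exact absurd h hs0
  · linarith

lemma mem_cycClass (α : F) (hα : IsPrimitiveElt α) (hα0 : α ≠ 0) (e i : ℕ) (hi : i < e)
    (he : e ∣ Fintype.card F - 1) (x : F) :
    x ∈ cycClass α e i ↔ ∃ n, x = α ^ n ∧ n % e = i := by
  rw [cycClass, Finset.mem_image]
  constructor
  · rintro ⟨j, _, rfl⟩
    exact ⟨_, rfl, by rw [Nat.mul_add_mod, Nat.mod_eq_of_lt hi]⟩
  · rintro ⟨n, rfl, hn⟩
    set Q := Fintype.card F - 1 with hQ
    have h1 : α ^ Q = 1 := FiniteField.pow_card_sub_one_eq_one α hα0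
    have hc : 1 < Fintype.card F := Fintype.one_lt_card
    have hm : n % Q % e = i := by rw [Nat.mod_mod_of_dvd _ he, hn]
    refine ⟨n % Q / e, ?_, ?_⟩
    · rw [Finset.mem_range]
      have := Nat.mod_lt n (show 0 < Q by omega)
      have := Nat.div_le_self (n % Q) e
      omega
    · conv_lhs => rw [← hm, Nat.div_add_mod]
      conv_rhs => rw [← Nat.div_add_mod n Q, pow_add, pow_mul, h1, one_pow, one_mul]

lemma exists_char (α : F) (hα : IsPrimitiveElt α) (hα0 : α ≠ 0) (h4 : 4 ∣ Fintype.card F - 1) :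
    ∃ χ : MulChar F GaussianInt, χ α = ⟨0, 1⟩ := by
  let u : GaussianIntˣ := ⟨⟨0, 1⟩, ⟨0, -1⟩, by decide, by decide⟩
  have hu : u ^ 4 = 1 := by
    ext1; simp only [Units.val_pow_eq_pow_val, u]; decide
  have hr : u ∈ rootsOfUnity (Fintype.card Fˣ) GaussianInt := by
    rw [mem_rootsOfUnity, Fintype.card_units]
    obtain ⟨c, hc⟩ := h4
    rw [hc, pow_mul, hu, one_pow]
  have hg : ∀ x : Fˣ, x ∈ Subgroup.zpowers (Units.mk0 α hα0) := by
    intro x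
    obtain ⟨n, hn⟩ := hα x x.ne_zero
    refine ⟨n, ?_⟩
    ext; simp [hn]
  exact ⟨MulChar.ofRootOfUnity hr hg, MulChar.ofRootOfUnity_spec hr hg⟩

lemma re_sum {ι : Type*} (S : Finset ι) (f : ι → GaussianInt) :
    (∑ x ∈ S, f x).re = ∑ x ∈ S, (f x).re := by
  classical
  induction S using Finset.induction_on with
  | empty => simp
  | insert a S ha ih => rw [Finset.sum_insert ha, Finset.sum_insert ha, ← ih]; simp

lemma im_sum {ι : Type*} (S : Finset ι) (f : ι → GaussianInt) :
    (∑ x ∈ S, f x).im = ∑ x ∈ S, (f x).im := by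
  classical
  induction S using Finset.induction_on with
  | empty => simp
  | insert a S ha ih => rw [Finset.sum_insert ha, Finset.sum_insert ha, ← ih]; simp

lemma gI_pow (n : ℕ) : (⟨0, 1⟩ : GaussianInt) ^ n = (⟨0, 1⟩ : GaussianInt) ^ (n % 4) := by
  conv_lhs => rw [← Nat.div_add_mod n 4, pow_add, pow_mul]
  rw [show (⟨0, 1⟩ : GaussianInt) ^ 4 = 1 by decide, one_pow, one_mul]

lemma chi_cases (α : F) (hα : IsPrimitiveElt α) (χ : MulChar F GaussianInt) (hχ : χ α = ⟨0, 1⟩)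
    {x : F} (hx : x ≠ 0) : χ x = 1 ∨ χ x = ⟨0, 1⟩ ∨ χ x = -1 ∨ χ x = ⟨0, -1⟩ := by
  obtain ⟨n, rfl⟩ := hα x hx
  rw [map_pow, hχ, gI_pow]
  have : n % 4 < 4 := Nat.mod_lt _ (by norm_num)
  interval_cases n % 4 <;> decide

lemma alpha_half (α : F) (hα0 : α ≠ 0) (χ : MulChar F GaussianInt) (hχ : χ α = ⟨0, 1⟩)
    (h5 : Fintype.card F % 8 = 5) : α ^ ((Fintype.card F - 1) / 2) = -1 := by
  have h1 : (α ^ ((Fintype.card F - 1) / 2)) ^ 2 = 1 := by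
    rw [← pow_mul, Nat.div_mul_cancel (by omega)]
    exact FiniteField.pow_card_sub_one_eq_one α hα0
  rcases (sq_eq_sq_iff_eq_or_eq_neg.mp (h1.trans (one_pow 2).symm)) with h | h
  · exfalso
    have h2 := congrArg χ h
    rw [map_pow, hχ, map_one, gI_pow, show (Fintype.card F - 1) / 2 % 4 = 2 by omega] at h2
    revert h2; decide
  · exact h

lemma chi_neg_one (α : F) (hα0 : α ≠ 0) (χ : MulChar F GaussianInt) (hχ : χ α = ⟨0, 1⟩)
    (h5 : Fintype.card F % 8 = 5) : χ (-1) = -1 := by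
  rw [← alpha_half α hα0 χ hχ h5, map_pow, hχ, gI_pow,
    show (Fintype.card F - 1) / 2 % 4 = 2 by omega]
  decide

lemma chi_ne_one (α : F) (hα0 : α ≠ 0) (χ : MulChar F GaussianInt) (hχ : χ α = ⟨0, 1⟩)
    : χ ≠ 1 ∧ χ ^ 2 ≠ 1 ∧ χ ^ 3 ≠ 1 := by
  refine ⟨?_, ?_, ?_⟩ <;> intro h <;> have h2 := congrArg (fun c : MulChar F GaussianInt => c α) h
  · simp only [hχ, MulChar.one_apply (isUnit_iff_ne_zero.mpr hα0)] at h2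
    revert h2; decide
  · simp only [MulChar.pow_apply' _ two_ne_zero, hχ,
      MulChar.one_apply (isUnit_iff_ne_zero.mpr hα0)] at h2
    revert h2; decide
  · simp only [MulChar.pow_apply' _ three_ne_zero, hχ,
      MulChar.one_apply (isUnit_iff_ne_zero.mpr hα0)] at h2
    revert h2; decide

lemma chi_inv (α : F) (hα : IsPrimitiveElt α) (χ : MulChar F GaussianInt) (hχ : χ α = ⟨0, 1⟩)
    (x : F) : χ⁻¹ x = star (χ x) := by
  by_cases hx : x = 0
  · subst hx; rw [MulChar.map_zero, MulChar.map_zero, star_zero]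
  have h1 : χ x⁻¹ * χ x = 1 := by rw [← map_mul, inv_mul_cancel₀ hx, map_one]
  have h2 : star (χ x) * χ x = 1 := by
    rcases chi_cases α hα χ hχ hx with h | h | h | h <;> rw [h] <;> decide
  have h3 : χ x ≠ 0 := by intro h; rw [h, mul_zero] at h1; exact zero_ne_one h1
  rw [MulChar.inv_apply']
  exact mul_right_cancel₀ h3 (h1.trans h2.symm)

lemma J1_eq (α : F) (hα : IsPrimitiveElt α) (hα0 : α ≠ 0) (χ : MulChar F GaussianInt)
    (hχ : χ α = ⟨0, 1⟩) (h5 : Fintype.card F % 8 = 5) :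
    jacobiSum χ χ = - jacobiSum χ (χ ^ 2) := by
  have h4 : ∀ x, x ≠ 0 → χ x ^ 4 = 1 := by
    intro x hx
    rcases chi_cases α hα χ hχ hx with h | h | h | h <;> rw [h] <;> decide
  have hx0 : ∀ x : F, x = 0 → χ x = 0 := by rintro x rfl; exact χ.map_zero
  have e1 : ∑ d, (χ ^ 2) d * ∑ x, χ x * χ (x - d) =
      ∑ d : F, if d = 0 then 0 else - jacobiSum χ χ := by
    refine Finset.sum_congr rfl fun d _ => ?_
    by_cases hd : d = 0
    · subst hd; rw [MulChar.map_zero, zero_mul, if_pos rfl]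
    · rw [if_neg hd, conv_char χ χ hd, chi_neg_one α hα0 χ hχ h5, MulChar.pow_apply' _ two_ne_zero]
      linear_combination (- jacobiSum χ χ) * h4 d hd
  have e2 : ∑ d, (χ ^ 2) d * ∑ x, χ x * χ (x - d) =
      ∑ x : F, if x = 0 then 0 else jacobiSum χ (χ ^ 2) := by
    simp_rw [Finset.mul_sum]
    rw [Finset.sum_comm]
    refine Finset.sum_congr rfl fun x _ => ?_
    by_cases hx : x = 0
    · subst hx; simp [χ.map_zero]
    · rw [if_neg hx, jacobiSum_comm]
      have := conv_char' (χ ^ 2) χ hx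
      calc ∑ d, (χ ^ 2) d * (χ x * χ (x - d)) = χ x * ∑ d, (χ ^ 2) d * χ (x - d) := by
            rw [Finset.mul_sum]; exact Finset.sum_congr rfl fun d _ => by ring
        _ = _ := by
            rw [this, MulChar.pow_apply' _ two_ne_zero]
            linear_combination (jacobiSum (χ ^ 2) χ) * h4 x hx
  have e3 : ∀ c : GaussianInt, (∑ x : F, if x = 0 then 0 else c) = (Fintype.card F - 1) * c := by
    intro c
    have : ∀ x : F, (if x = 0 then 0 else c) = c - if x = 0 then c else 0 := by
      intro x; split_ifs <;> simp
    simp_rw [this, Finset.sum_sub_distrib]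
    simp
    ring
  rw [e1, e3, e3] at e2
  have hne : ((Fintype.card F : GaussianInt) - 1) ≠ 0 := by
    rw [sub_ne_zero]
    have : Fintype.card F ≠ 1 := by omega
    exact_mod_cast this
  have := mul_left_cancel₀ hne e2
  rw [← this, neg_neg]

lemma J2_norm (α : F) (hα : IsPrimitiveElt α) (hα0 : α ≠ 0) (χ : MulChar F GaussianInt)
    (hχ : χ α = ⟨0, 1⟩) :
    (jacobiSum χ (χ ^ 2)).re ^ 2 + (jacobiSum χ (χ ^ 2)).im ^ 2 = (Fintype.card F : ℤ) := by
  obtain ⟨n1, n2, n3⟩ := chi_ne_one α hα0 χ hχ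
  set T := GaussianInt.toComplex with hT
  have inj : Function.Injective T := fun a b h => GaussianInt.toComplex_inj.mp h
  have hch : ringChar ℂ ≠ ringChar F := by
    rw [ringChar.eq_zero]
    exact (CharP.ringChar_ne_zero_of_finite F).symm
  have m1 : ∀ c : MulChar F GaussianInt, c ≠ 1 → c.ringHomComp T ≠ 1 := by
    intro c hc h
    exact hc ((MulChar.ringHomComp_eq_one_iff inj).mp h)
  have key := jacobiSum_mul_jacobiSum_inv hch (m1 χ n1) (m1 _ n2)
    (by rw [← MulChar.ringHomComp_mul]; exact m1 _ (by rw [← pow_succ']; exact n3))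
  have st : jacobiSum (χ.ringHomComp T)⁻¹ ((χ ^ 2).ringHomComp T)⁻¹ =
      T (star (jacobiSum χ (χ ^ 2))) := by
    rw [MulChar.ringHomComp_inv, MulChar.ringHomComp_inv, jacobiSum_ringHomComp]
    congr 1
    rw [jacobiSum, jacobiSum, star_sum]
    refine Finset.sum_congr rfl fun x _ => ?_
    rw [← inv_pow, MulChar.pow_apply' _ two_ne_zero, MulChar.pow_apply' _ two_ne_zero,
      chi_inv α hα χ hχ, chi_inv α hα χ hχ, star_mul', star_pow]
  rw [st, jacobiSum_ringHomComp, ← map_mul, ← map_natCast T] at key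
  have k2 := congrArg Zsqrtd.re (inj key)
  simp at k2
  linarith

lemma J2_mod (α : F) (hα : IsPrimitiveElt α) (hα0 : α ≠ 0) (χ : MulChar F GaussianInt)
    (hχ : χ α = ⟨0, 1⟩) (h5 : Fintype.card F % 8 = 5) :
    (jacobiSum χ (χ ^ 2)).re % 4 = 1 ∧ (jacobiSum χ (χ ^ 2)).im % 2 = 0 := by
  obtain ⟨n1, n2, n3⟩ := chi_ne_one α hα0 χ hχ
  have hN := J2_norm α hα hα0 χ hχ
  have hd : (⟨2, 2⟩ : GaussianInt) ∣ jacobiSum χ (χ ^ 2) + Fintype.card F := by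
    have e : jacobiSum χ (χ ^ 2) + Fintype.card F =
        ∑ x, (if x = 0 then 0 else if x = 1 then 0 else (χ x - 1) * ((χ ^ 2) (1 - x) - 1)) := by
      have e1 : ∀ x, (if x = 0 then 0 else if x = 1 then 0 else (χ x - 1) * ((χ ^ 2) (1 - x) - 1))
          = χ x * (χ ^ 2) (1 - x) - χ x - (χ ^ 2) (1 - x) + 1
            := by
        intro x
        by_cases h0 : x = 0
        · subst h0; simp
        by_cases h1 : x = 1
        · subst h1; simp
        · simp only [h0, h1, if_false]; ring
      simp_rw [e1, Finset.sum_add_distrib, Finset.sum_sub_distrib]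
      have s2 : ∑ x, (χ ^ 2) (1 - x) = 0 := by
        have e9 := Equiv.sum_comp (Equiv.subLeft (1 : F)) (fun x => (χ ^ 2) x)
        simp only [Equiv.subLeft_apply] at e9
        rw [e9]
        exact MulChar.sum_eq_zero_of_ne_one n2
      rw [s2, MulChar.sum_eq_zero_of_ne_one n1, ← jacobiSum]
      simp
    rw [e]
    refine Finset.dvd_sum fun x _ => ?_
    split_ifs with h0 h1
    · exact dvd_zero _
    · exact dvd_zero _
    · have h1' : 1 - x ≠ 0 := sub_ne_zero.mpr (Ne.symm h1)
      rw [MulChar.pow_apply' _ two_ne_zero]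
      have d1 : (⟨1, 1⟩ : GaussianInt) ∣ χ x - 1 := by
        rcases chi_cases α hα χ hχ h0 with h | h | h | h <;> rw [h]
        · exact ⟨0, by decide⟩
        · exact ⟨⟨0, 1⟩, by decide⟩
        · exact ⟨⟨-1, 1⟩, by decide⟩
        · exact ⟨-1, by decide⟩
      have d2 : (2 : GaussianInt) ∣ χ (1 - x) ^ 2 - 1 := by
        rcases chi_cases α hα χ hχ h1' with h | h | h | h <;> rw [h]
        · exact ⟨0, by decide⟩
        · exact ⟨-1, by decide⟩
        · exact ⟨0, by decide⟩
        · exact ⟨-1, by decide⟩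
      have := mul_dvd_mul d1 d2
      rwa [show (⟨1, 1⟩ : GaussianInt) * 2 = ⟨2, 2⟩ by decide] at this
  obtain ⟨z, hz⟩ := hd
  have hr := congrArg Zsqrtd.re hz
  have hi := congrArg Zsqrtd.im hz
  simp at hr hi
  generalize (jacobiSum χ (χ ^ 2)).re = A at *
  generalize (jacobiSum χ (χ ^ 2)).im = B at *
  refine ⟨?_, by omega⟩
  by_cases hB : (z.re + z.im) % 2 = 1
  · omega
  · exfalso
    obtain ⟨w, hw⟩ : ∃ w, B = 4 * w := ⟨(z.re + z.im) / 2, by omega⟩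
    have hA : A % 2 = 1 := by omega
    obtain ⟨v, hv⟩ : ∃ v, A = 2 * v + 1 := ⟨A / 2, by omega⟩
    have hev := Int.even_mul_succ_self v
    obtain ⟨y, hy⟩ := hev
    have : A ^ 2 + B ^ 2 = 8 * y + 1 + 8 * (2 * w ^ 2) := by rw [hw, hv]; linear_combination 4 * hy
    omega

lemma red_sum (k : ℕ) (hk : 0 < k) (hq : Fintype.card F = 4 * k + 1) :
    ∑ x : F, x ^ k * (1 - x) ^ (2 * k) = 0 := by
  have : ∀ x : F, x ^ k * (1 - x) ^ (2 * k) =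
      ∑ j ∈ Finset.range (2 * k + 1), ((-1) ^ j * ((2 * k).choose j : F)) * x ^ (k + j) := by
    intro x
    rw [sub_eq_neg_add, add_pow, Finset.mul_sum]
    refine Finset.sum_congr rfl fun j _ => ?_
    rw [neg_pow, pow_add, one_pow]; ring
  simp_rw [this]
  rw [Finset.sum_comm]
  refine Finset.sum_eq_zero fun j hj => ?_
  rw [Finset.mem_range] at hj
  rw [← Finset.mul_sum, FiniteField.sum_pow_lt_card_sub_one, mul_zero]
  omega

lemma red_sum' (k : ℕ) (hk : 0 < k) (hq : Fintype.card F = 4 * k + 1) :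
    ∑ x : F, x ^ (3 * k) * (1 - x) ^ (2 * k) = - ((-1) ^ k * ((2 * k).choose k : F)) := by
  have : ∀ x : F, x ^ (3 * k) * (1 - x) ^ (2 * k) =
      ∑ j ∈ Finset.range (2 * k + 1), ((-1) ^ j * ((2 * k).choose j : F)) * x ^ (3 * k + j) := by
    intro x
    rw [sub_eq_neg_add, add_pow, Finset.mul_sum]
    refine Finset.sum_congr rfl fun j _ => ?_
    rw [neg_pow, pow_add, one_pow]; ring
  simp_rw [this]
  rw [Finset.sum_comm, Finset.sum_eq_single k]
  · rw [← Finset.mul_sum, sum_pow_field _ (by omega), if_pos]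
    · ring
    · exact ⟨1, by omega⟩
  · intro j hj hne
    rw [Finset.mem_range] at hj
    rw [← Finset.mul_sum, sum_pow_field _ (by omega), if_neg, mul_zero]
    rintro ⟨c, hc⟩
    rw [hq, Nat.add_sub_cancel] at hc
    rcases c with _ | _ | c
    · omega
    · omega
    · nlinarith
  · intro h; exact absurd (Finset.mem_range.mpr (by omega)) h

lemma J2_red (α : F) (hα : IsPrimitiveElt α) (hα0 : α ≠ 0) (χ : MulChar F GaussianInt)
    (hχ : χ α = ⟨0, 1⟩) (k : ℕ) (hk : 0 < k) (hq : Fintype.card F = 4 * k + 1)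
    (hi : (α ^ k) * (α ^ k) = -1) :
    ((jacobiSum χ (χ ^ 2)).re : F) + (jacobiSum χ (χ ^ 2)).im * α ^ k = 0 ∧
    ((jacobiSum χ (χ ^ 2)).re : F) - (jacobiSum χ (χ ^ 2)).im * α ^ k =
      - ((-1) ^ k * ((2 * k).choose k : F)) := by
  let φ : GaussianInt →+* F := Zsqrtd.lift ⟨α ^ k, by rw [hi]; simp⟩
  let ψ : GaussianInt →+* F := Zsqrtd.lift ⟨- α ^ k, by rw [neg_mul_neg, hi]; simp⟩
  have hφ : ∀ z : GaussianInt, φ z = z.re + z.im * α ^ k := fun z => rfl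
  have hψ : ∀ z : GaussianInt, ψ z = z.re + z.im * (- α ^ k) := fun z => rfl
  have vφ : ∀ x, φ (χ x) = x ^ k := by
    intro x
    by_cases hx : x = 0
    · subst hx; rw [MulChar.map_zero, map_zero, zero_pow hk.ne']
    obtain ⟨n, rfl⟩ := hα x hx
    rw [map_pow, map_pow, hχ, hφ]
    simp only [Int.cast_zero, Int.cast_one, zero_add, one_mul]
    ring
  have vψ : ∀ x, ψ (χ x) = x ^ (3 * k) := by
    intro x
    by_cases hx : x = 0
    · subst hx; rw [MulChar.map_zero, map_zero, zero_pow (by omega)]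
    obtain ⟨n, rfl⟩ := hα x hx
    rw [map_pow, map_pow, hχ, hψ]
    have : - α ^ k = α ^ (3 * k) := by
      rw [show 3 * k = k + k + k by ring, pow_add, pow_add, hi]; ring
    simp only [Int.cast_zero, Int.cast_one, zero_add, one_mul, this]
    ring
  have h1 := red_sum (F := F) k hk hq
  have h2 := red_sum' (F := F) k hk hq
  constructor
  · rw [← hφ, jacobiSum, map_sum, ← h1]
    refine Finset.sum_congr rfl fun x _ => ?_
    rw [map_mul, MulChar.pow_apply' _ two_ne_zero, map_pow, vφ, vφ, ← pow_mul, mul_comm k 2]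
  · rw [sub_eq_add_neg, ← mul_neg, ← hψ, jacobiSum, map_sum, ← h2]
    refine Finset.sum_congr rfl fun x _ => ?_
    rw [map_mul, MulChar.pow_apply' _ two_ne_zero, map_pow, vψ, vψ]
    congr 1
    by_cases hx : 1 - x = 0
    · rw [hx, zero_pow (by omega), zero_pow (by omega), zero_pow (by omega)]
    · have := FiniteField.pow_card_sub_one_eq_one (1 - x) hx
      rw [hq, Nat.add_sub_cancel] at this
      rw [← pow_mul, show 3 * k * 2 = 4 * k + 2 * k by ring, pow_add, this, one_mul]

lemma pds_of_counts (A E : Finset F) (h0 : (0 : F) ∉ A) (lam mu : ℕ)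
    (h : ∀ d, d ≠ 0 → (intDiff E).count d = if d ∈ A then lam else mu) :
    intDiff E = lam • (A.erase 0).val + mu • (Gstar F \ A).val := by
  ext d
  rw [Multiset.count_add, Multiset.count_nsmul, Multiset.count_nsmul, Finset.erase_eq_of_notMem h0]
  by_cases hd : d = 0
  · subst hd
    rw [count_intDiff_zero, Multiset.count_eq_zero.mpr (by simpa using h0),
      Multiset.count_eq_zero.mpr (by rw [Finset.mem_val]; simp [Gstar])]
    simp
  · rw [h d hd]
    by_cases hA : d ∈ A
    · rw [if_pos hA, Multiset.count_eq_one_of_mem A.nodup hA,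
        Multiset.count_eq_zero.mpr (by rw [Finset.mem_val]; simp [hA])]
      simp
    · rw [if_neg hA, Multiset.count_eq_zero.mpr (by simpa using hA),
        Multiset.count_eq_one_of_mem (Finset.nodup _) (by rw [Finset.mem_val]; simp [hA, Gstar, hd])]
      simp

lemma two_classes (A B E : Finset F) (h0 : (0 : F) ∉ A) (h0' : (0 : F) ∉ B) (a b : ℕ)
    (hAB : ∀ d, d ≠ 0 → (d ∈ B ↔ d ∉ A))
    (h : ∀ d, d ≠ 0 → (intDiff E).count d = if d ∈ A then a else b) :
    intDiff E = a • A.val + b • B.val := by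
  rw [pds_of_counts A E h0 a b h, Finset.erase_eq_of_notMem h0]
  have : Gstar F \ A = B := by
    ext x
    by_cases hx : x = 0
    · subst hx; simp [Gstar, h0']
    · simp [Gstar, hx, hAB x hx]
  rw [this]

lemma conv_f (α : F) (hα : IsPrimitiveElt α) (hα0 : α ≠ 0) (χ : MulChar F GaussianInt)
    (hχ : χ α = ⟨0, 1⟩) (h5 : Fintype.card F % 8 = 5) {d : F} (hd : d ≠ 0) :
    ∑ x, ((χ x).re - (χ x).im) * ((χ (x - d)).re - (χ (x - d)).im) =
      -1 - (χ d ^ 2).re * (jacobiSum χ (χ ^ 2)).im := by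
  obtain ⟨n1, n2, n3⟩ := chi_ne_one α hα0 χ hχ
  have e1 : ∀ x, ((χ x).re - (χ x).im) * ((χ (x - d)).re - (χ (x - d)).im) =
      (χ x * χ⁻¹ (x - d)).re - (χ x * χ (x - d)).im := by
    intro x
    rw [chi_inv α hα χ hχ]
    simp
    ring
  simp_rw [e1]
  rw [Finset.sum_sub_distrib, ← re_sum, ← im_sum, conv_char χ χ⁻¹ hd, conv_char χ χ hd,
    J1_eq α hα hα0 χ hχ h5, jacobiSum_nontrivial_inv n1, chi_inv α hα χ hχ, chi_inv α hα χ hχ,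
    chi_neg_one α hα0 χ hχ h5]
  rcases chi_cases α hα χ hχ hd with h | h | h | h <;> rw [h] <;> simp [pow_two]

lemma conv_g (α : F) (hα : IsPrimitiveElt α) (hα0 : α ≠ 0) (χ : MulChar F GaussianInt)
    (hχ : χ α = ⟨0, 1⟩) (h5 : Fintype.card F % 8 = 5) {d : F} (hd : d ≠ 0) :
    ∑ x, (χ x ^ 2).re * (χ (x - d) ^ 2).re = -1 := by
  obtain ⟨n1, n2, n3⟩ := chi_ne_one α hα0 χ hχ
  have hself : χ ^ 2 = (χ ^ 2)⁻¹ := by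
    apply MulChar.ext'
    intro x
    rw [← inv_pow, MulChar.pow_apply' _ two_ne_zero, MulChar.pow_apply' _ two_ne_zero,
      chi_inv α hα χ hχ]
    by_cases hx : x = 0
    · subst hx; rw [MulChar.map_zero, star_zero]
    rcases chi_cases α hα χ hχ hx with h | h | h | h <;> rw [h] <;> decide
  have e1 : ∀ x, (χ x ^ 2).re * (χ (x - d) ^ 2).re = ((χ ^ 2) x * (χ ^ 2) (x - d)).re := by
    intro x
    rw [MulChar.pow_apply' _ two_ne_zero, MulChar.pow_apply' _ two_ne_zero]
    by_cases hx : x = 0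
    · subst hx; simp [χ.map_zero]
    rcases chi_cases α hα χ hχ hx with h | h | h | h <;> rw [h] <;> simp [pow_two]
  simp_rw [e1]
  rw [← re_sum, conv_char _ _ hd]
  have e2 : jacobiSum (χ ^ 2) (χ ^ 2) = -1 := by
    have := jacobiSum_nontrivial_inv n2
    rw [← hself, MulChar.pow_apply' _ two_ne_zero, chi_neg_one α hα0 χ hχ h5] at this
    rw [this]; decide
  rw [e2, MulChar.pow_apply' _ two_ne_zero, MulChar.pow_apply' _ two_ne_zero,
    chi_neg_one α hα0 χ hχ h5]
  rcases chi_cases α hα χ hχ hd with h | h | h | h <;> rw [h] <;> decide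

lemma J2_im (p m : ℕ) (hp : p.Prime) (hqpm : Fintype.card F = p ^ m)
    (α : F) (hα : IsPrimitiveElt α) (hα0 : α ≠ 0) (χ : MulChar F GaussianInt)
    (hχ : χ α = ⟨0, 1⟩) (h5 : Fintype.card F % 8 = 5)
    (s t : ℤ) (hst : (Fintype.card F : ℤ) = s ^ 2 + t ^ 2)
    (hps : ¬((p : ℤ) ∣ s)) (hs4 : s % 4 = 1)
    (ht : (t : F) * α ^ ((Fintype.card F - 1) / 4) = (s : F)) :
    (jacobiSum χ (χ ^ 2)).im = - t := by
  have := Fact.mk hp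
  have hF : CharP F p := charP_of_card_eq_prime_pow hqpm
  have hp8 : p % 8 = 5 := by
    have hm8 : p ^ m % 8 = 5 := by rw [← hqpm]; exact h5
    have hodd : p % 2 = 1 := by
      by_contra hne
      have hm0 : m ≠ 0 := by rintro rfl; simp at hm8
      have hev : Even (p ^ m) := (Nat.even_iff.mpr (by omega) : Even p).pow_of_ne_zero hm0
      have := Nat.even_iff.mp hev
      omega
    have hsq : p ^ 2 % 8 = 1 := by
      have : p % 8 = 1 ∨ p % 8 = 3 ∨ p % 8 = 5 ∨ p % 8 = 7 := by omega
      rcases this with h | h | h | h <;> rw [Nat.pow_mod, h]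
    have hsqj : ∀ j, (p ^ 2) ^ j % 8 = 1 := by
      intro j; rw [Nat.pow_mod, hsq, one_pow]; rfl
    obtain ⟨j, rfl | rfl⟩ := Nat.even_or_odd' m
    · rw [pow_mul, hsqj] at hm8; norm_num at hm8
    · rw [pow_succ, pow_mul, Nat.mul_mod, hsqj, one_mul, Nat.mod_mod] at hm8
      exact hm8
  obtain ⟨k, hk, hnd⟩ := choose_lucas p (p / 4) hp (by omega) m
  rw [← hqpm] at hk
  have hk0 : 0 < k := by omega
  rw [show (Fintype.card F - 1) / 4 = k by omega] at ht
  have hhalf := alpha_half α hα0 χ hχ h5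
  have hi : α ^ k * α ^ k = -1 := by
    rw [← hhalf, ← pow_add]; congr 1; omega
  obtain ⟨r1, r2⟩ := J2_red α hα hα0 χ hχ k hk0 hk.symm hi
  obtain ⟨m1, m2⟩ := J2_mod α hα hα0 χ hχ h5
  have hN := J2_norm α hα hα0 χ hχ
  generalize (jacobiSum χ (χ ^ 2)).re = A at *
  generalize (jacobiSum χ (χ ^ 2)).im = B at *
  have hch : (((2 * k).choose k : ℕ) : F) ≠ 0 := by
    rwa [Ne, CharP.cast_eq_zero_iff F p]
  have h2 : (2 : F) ≠ 0 := by
    intro h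
    have h11 : (-1 : F) = 1 := by linear_combination -h
    have hc := chi_neg_one α hα0 χ hχ h5
    rw [h11, map_one] at hc
    revert hc; decide
  have hs0 : (s : F) ≠ 0 := by rwa [Ne, CharP.intCast_eq_zero_iff F p]
  have ht0 : (t : F) ≠ 0 := by intro h; rw [h, zero_mul] at ht; exact hs0 ht.symm
  have hA0 : (A : F) ≠ 0 := by
    intro h
    rw [h] at r1 r2
    rw [zero_add] at r1
    rw [r1, sub_zero] at r2
    have : (-1 : F) ^ k * (((2 * k).choose k : ℕ) : F) = 0 := by linear_combination r2
    rcases mul_eq_zero.mp this with h | h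
    · exact pow_ne_zero k (neg_ne_zero.mpr one_ne_zero) h
    · exact hch h
  have hndiv : ¬ ((p : ℤ) ∣ A * t - B * s) := by
    rw [← CharP.intCast_eq_zero_iff F p]
    push_cast
    have : (A : F) * t - B * s = 2 * A * t := by
      linear_combination (B : F) * ht - (t : F) * r1
    rw [this]
    exact mul_ne_zero (mul_ne_zero h2 hA0) ht0
  have hcop : IsCoprime ((Fintype.card F : ℕ) : ℤ) (A * t - B * s) := by
    rw [hqpm]; push_cast
    exact ((Nat.prime_iff_prime_int.mp hp).coprime_iff_not_dvd.mpr hndiv).pow_left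
  have hdvd : ((Fintype.card F : ℕ) : ℤ) ∣ A * t + B * s := by
    refine hcop.dvd_of_dvd_mul_right ⟨A ^ 2 - s ^ 2, ?_⟩
    have e1 : t ^ 2 = Fintype.card F - s ^ 2 := by linarith
    have e2 : B ^ 2 = Fintype.card F - A ^ 2 := by linarith
    linear_combination A ^ 2 * e1 - s ^ 2 * e2
  have hq0 : (0 : ℤ) < (Fintype.card F : ℕ) := by exact_mod_cast Fintype.card_pos
  have ht2 : t % 2 = 0 := by
    have : (s ^ 2 + t ^ 2) % 2 = 1 := by rw [← hst]; omega
    rcases Int.emod_two_eq_zero_or_one t with h | h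
    · exact h
    · have hs2 : s % 2 = 1 := by omega
      simp [pow_two, Int.add_emod, Int.mul_emod, h, hs2] at this
  exact normalized_unique _ A B s t hq0 hst hN.symm hs4 m1 m2 ht2 hdvd

end Helpers

/-- For a prime power `q = p^m ≡ 5 (mod 8)` with the Katre–Rajwade
normalized representation `q = s² + t²`, the set `D = C_0^4 ∪ C_3^4` satisfies
`Δ(D) = ((q-3+t)/4) • C_0^2 + ((q-3-t)/4) • C_1^2`; in particular `D` is a skew PDS
corresponding to the Paley PDS `C_0^2` if `t = -2`, and to `C_1^2` if `t = 2`. -/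
theorem stmt_1 {F : Type*} [Field F] [Fintype F] [DecidableEq F]
    (q p m : ℕ) (hp : p.Prime) (hq : Fintype.card F = q) (hqpm : q = p ^ m)
    (hq8 : q % 8 = 5)
    (α : F) (hα : IsPrimitiveElt α)
    (s t : ℤ) (hst : (q : ℤ) = s ^ 2 + t ^ 2)
    (hps : ¬((p : ℤ) ∣ s)) (hs4 : s % 4 = 1)
    (ht : (t : F) * α ^ ((q - 1) / 4) = (s : F)) :
    (∃ a b : ℕ, 4 * (a : ℤ) = (q : ℤ) - 3 + t ∧ 4 * (b : ℤ) = (q : ℤ) - 3 - t ∧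
      intDiff (cycClass α 4 0 ∪ cycClass α 4 3) =
        a • (cycClass α 2 0).val + b • (cycClass α 2 1).val) ∧
    (t = -2 → IsSkewPDS (cycClass α 4 0 ∪ cycClass α 4 3) (cycClass α 2 0)
        q ((q - 1) / 2) ((q - 5) / 4) ((q - 1) / 4)) ∧
    (t = 2 → IsSkewPDS (cycClass α 4 0 ∪ cycClass α 4 3) (cycClass α 2 1)
        q ((q - 1) / 2) ((q - 5) / 4) ((q - 1) / 4)) := by
  subst hq
  have hα0 : α ≠ 0 := by
    rintro rfl
    have hc : Fintype.card F ≤ 2 := by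
      have hsub : (Finset.univ : Finset F) ⊆ {0, 1} := by
        intro x _
        by_cases hx : x = 0
        · simp [hx]
        · obtain ⟨n, hn⟩ := hα x hx
          rcases n with _ | n
          · simp [← hn]
          · simp [← hn]
      exact (Finset.card_le_card hsub).trans Finset.card_le_two
    omega
  have h4 : 4 ∣ Fintype.card F - 1 := by omega
  have h2d : 2 ∣ Fintype.card F - 1 := by omega
  obtain ⟨χ, hχ⟩ := exists_char α hα hα0 h4
  obtain ⟨n1, n2, n3⟩ := chi_ne_one α hα0 χ hχ
  have hJ := J2_im p m hp hqpm α hα hα0 χ hχ hq8 s t hst hps hs4 ht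
  have hs1 := MulChar.sum_eq_zero_of_ne_one n1
  have hs2 := MulChar.sum_eq_zero_of_ne_one n2
  have hpow : ∀ n : ℕ, χ (α ^ n) = (⟨0, 1⟩ : GaussianInt) ^ (n % 4) := by
    intro n; rw [map_pow, hχ, gI_pow]
  let f : F → ℤ := fun x => (χ x).re - (χ x).im
  let g : F → ℤ := fun x => (χ x ^ 2).re
  have f0 : f 0 = 0 := by simp [f, χ.map_zero]
  have g0 : g 0 = 0 := by simp [g, χ.map_zero]
  have f1 : ∀ x, x ≠ 0 → f x = 1 ∨ f x = -1 := by
    intro x hx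
    rcases chi_cases α hα χ hχ hx with h | h | h | h <;> simp only [f, h] <;> decide
  have g1 : ∀ x, x ≠ 0 → g x = 1 ∨ g x = -1 := by
    intro x hx
    rcases chi_cases α hα χ hχ hx with h | h | h | h <;> simp only [g, h] <;> decide
  have fs : ∑ x, f x = 0 := by
    simp only [f]
    rw [Finset.sum_sub_distrib, ← re_sum, ← im_sum, hs1]; rfl
  have gs : ∑ x, g x = 0 := by
    simp only [g]
    rw [← re_sum]
    simp_rw [MulChar.pow_apply' χ two_ne_zero] at hs2
    rw [hs2]; rfl
  have fneg : ∀ x, f (-x) = - f x := by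
    intro x
    simp only [f]
    rw [neg_eq_neg_one_mul x, map_mul, chi_neg_one α hα0 χ hχ hq8]
    simp; ring
  have gneg : ∀ x, g (-x) = g x := by
    intro x
    simp only [g]
    rw [neg_eq_neg_one_mul x, map_mul, chi_neg_one α hα0 χ hχ hq8]
    simp
  have memD : ∀ x, x ∈ cycClass α 4 0 ∪ cycClass α 4 3 ↔ f x = 1 := by
    intro x
    rw [Finset.mem_union, mem_cycClass α hα hα0 4 0 (by norm_num) h4,
      mem_cycClass α hα hα0 4 3 (by norm_num) h4]
    constructor
    · rintro (⟨n, rfl, hn⟩ | ⟨n, rfl, hn⟩) <;> simp only [f, hpow, hn] <;> decide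
    · intro h
      have hx : x ≠ 0 := by rintro rfl; rw [f0] at h; exact zero_ne_one h
      obtain ⟨n, rfl⟩ := hα x hx
      have hlt : n % 4 < 4 := Nat.mod_lt _ (by norm_num)
      have hcase : n % 4 = 0 ∨ n % 4 = 3 := by
        simp only [f, hpow] at h
        generalize n % 4 = r at *
        interval_cases r
        · simp
        · revert h; decide
        · revert h; decide
        · simp
      rcases hcase with h | h
      · exact Or.inl ⟨n, rfl, h⟩
      · exact Or.inr ⟨n, rfl, h⟩
  have gpow : ∀ n : ℕ, g (α ^ n) = (-1) ^ n := by
    intro n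
    have : χ (α ^ n) ^ 2 = ((((-1) ^ n : ℤ)) : GaussianInt) := by
      rw [map_pow, hχ, ← pow_mul, mul_comm, pow_mul,
        show (⟨0, 1⟩ : GaussianInt) ^ 2 = -1 by decide]
      push_cast; rfl
    simp only [g, this]
    exact Zsqrtd.re_intCast _
  have memA : ∀ x, x ∈ cycClass α 2 0 ↔ g x = 1 := by
    intro x
    rw [mem_cycClass α hα hα0 2 0 (by norm_num) h2d]
    constructor
    · rintro ⟨n, rfl, hn⟩
      rw [gpow, Even.neg_one_pow (Nat.even_iff.mpr hn)]
    · intro h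
      have hx : x ≠ 0 := by rintro rfl; rw [g0] at h; exact zero_ne_one h
      obtain ⟨n, rfl⟩ := hα x hx
      refine ⟨n, rfl, ?_⟩
      by_contra hn
      rw [gpow, Odd.neg_one_pow (Nat.odd_iff.mpr (by omega))] at h
      norm_num at h
  have memB : ∀ x, x ∈ cycClass α 2 1 ↔ - g x = 1 := by
    intro x
    rw [mem_cycClass α hα hα0 2 1 (by norm_num) h2d]
    constructor
    · rintro ⟨n, rfl, hn⟩
      rw [gpow, Odd.neg_one_pow (Nat.odd_iff.mpr hn)]; norm_num
    · intro h
      have hx : x ≠ 0 := by rintro rfl; rw [g0] at h; norm_num at h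
      obtain ⟨n, rfl⟩ := hα x hx
      refine ⟨n, rfl, ?_⟩
      by_contra hn
      rw [gpow, Even.neg_one_pow (Nat.even_iff.mpr (by omega))] at h
      norm_num at h
  have cD : ∀ d, d ≠ 0 → 4 * ((intDiff (cycClass α 4 0 ∪ cycClass α 4 3)).count d : ℤ) =
      Fintype.card F - 3 + g d * t := by
    intro d hd
    rw [four_count f f0 f1 fs _ memD hd, fneg]
    have := conv_f α hα hα0 χ hχ hq8 hd
    rw [hJ] at this
    simp only [f, g]
    rw [this]; ring
  have cA : ∀ d, d ≠ 0 → 4 * ((intDiff (cycClass α 2 0)).count d : ℤ) =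
      Fintype.card F - 3 - 2 * g d := by
    intro d hd
    rw [four_count g g0 g1 gs _ memA hd, gneg]
    have := conv_g α hα hα0 χ hχ hq8 hd
    simp only [g]
    rw [this]; ring
  have ng0 : (fun x => - g x) 0 = 0 := by simp [g0]
  have ng1 : ∀ x, x ≠ 0 → (fun x => - g x) x = 1 ∨ (fun x => - g x) x = -1 := by
    intro x hx; rcases g1 x hx with h | h <;> simp [h]
  have ngs : ∑ x, (fun x => - g x) x = 0 := by simp [gs]
  have cB : ∀ d, d ≠ 0 → 4 * ((intDiff (cycClass α 2 1)).count d : ℤ) =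
      Fintype.card F - 3 + 2 * g d := by
    intro d hd
    rw [four_count (fun x => - g x) ng0 ng1 ngs _ memB hd]
    have := conv_g α hα hα0 χ hχ hq8 hd
    simp only [gneg, neg_mul_neg]
    simp only [g]
    rw [this]; ring
  have kD := two_card f f0 f1 fs _ memD
  have kA := two_card g g0 g1 gs _ memA
  have kB := two_card (fun x => - g x) ng0 ng1 ngs _ memB
  have zA : (0 : F) ∉ cycClass α 2 0 := by rw [memA, g0]; norm_num
  have zB : (0 : F) ∉ cycClass α 2 1 := by rw [memB, g0]; norm_num
  have gone : g 1 = 1 := by have := gpow 0; simpa using this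
  have galpha : g α = -1 := by have := gpow 1; simpa using this
  refine ⟨?_, ?_, ?_⟩
  · have ca := cD 1 one_ne_zero
    have cb := cD α hα0
    rw [gone] at ca
    rw [galpha] at cb
    refine ⟨(intDiff (cycClass α 4 0 ∪ cycClass α 4 3)).count 1,
      (intDiff (cycClass α 4 0 ∪ cycClass α 4 3)).count α, by linarith, by linarith, ?_⟩
    refine two_classes _ _ _ zA zB _ _ ?_ ?_
    · intro d hd
      rw [memA, memB]
      rcases g1 d hd with h | h <;> rw [h] <;> norm_num
    · intro d hd
      have cd := cD d hd
      simp only [memA]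
      rcases g1 d hd with h | h
      · rw [if_pos h]; rw [h] at cd; omega
      · rw [if_neg (by rw [h]; norm_num)]; rw [h] at cd; omega
  · intro htt
    subst htt
    refine ⟨⟨rfl, by omega, pds_of_counts _ _ zA _ _ ?_⟩, by omega, pds_of_counts _ _ zA _ _ ?_⟩
    · intro d hd
      have cd := cA d hd
      simp only [memA]
      rcases g1 d hd with h | h
      · rw [if_pos h]; rw [h] at cd; omega
      · rw [if_neg (by rw [h]; norm_num)]; rw [h] at cd; omega
    · intro d hd
      have cd := cD d hd
      simp only [memA]
      rcases g1 d hd with h | h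
      · rw [if_pos h]; rw [h] at cd; omega
      · rw [if_neg (by rw [h]; norm_num)]; rw [h] at cd; omega
  · intro htt
    subst htt
    refine ⟨⟨rfl, by omega, pds_of_counts _ _ zB _ _ ?_⟩, by omega, pds_of_counts _ _ zB _ _ ?_⟩
    · intro d hd
      have cd := cB d hd
      simp only [memB]
      rcases g1 d hd with h | h
      · rw [if_neg (by rw [h]; norm_num)]; rw [h] at cd; omega
      · rw [if_pos (by rw [h]; norm_num)]; rw [h] at cd; omega
    · intro d hd
      have cd := cD d hd
      simp only [memB]
      rcases g1 d hd with h | h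
      · rw [if_neg (by rw [h]; norm_num)]; rw [h] at cd; omega
      · rw [if_pos (by rw [h]; norm_num)]; rw [h] at cd; omega
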